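/- Suppose: (i) W is conditionally independent of the pair (A, Z) given U; (ii) ε and A are conditionally independent given (Ṽ, U); (iii) the common-support condition holds: there is a nonnegative measurable conditional density f of A given (Ṽ, U) with respect to μ_A (for every bounded measurable φ, E[φ(A, Ṽ, U)] = E[∫_𝓐 φ(a, Ṽ, U) f(a, Ṽ, U) dμ_A(a)]) with f(a, Ṽ(ω), U(ω)) > 0 for μ_A ⊗ ℙ-almost every (a, ω) with π(a) ≠ 0; (iv) h₀ : 𝓐 × ℝ × 𝓦 → ℝ is measurable and satisfies the structural outcome-bridge condition E[Y − h₀(A, Ṽ, W) | A, Ṽ, U] = 0 almost surely; (v) all displayed integrands are integrable. Then the regression identity holds: E[∫_𝓐 h₀(a, Ṽ, W) π(a) dμ_A(a)] = J := E[∫_𝓐 g(a, U, ε) π(a) dμ_A(a)]. -/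

import Mathlib

open MeasureTheory ProbabilityTheory

lemma icc_aux_density {Ω 𝓐 𝓢 : Type*} [MeasurableSpace Ω] [MeasurableSpace 𝓐] [MeasurableSpace 𝓢]
    (P : Measure Ω) [IsProbabilityMeasure P] (μA : Measure 𝓐) [SigmaFinite μA]
    (A : Ω → 𝓐) (S : Ω → 𝓢) (hA : Measurable A) (hS : Measurable S)
    (f : 𝓐 × 𝓢 → ℝ) (hf : Measurable f) (hf_nonneg : ∀ x, 0 ≤ f x)
    (hd : ∀ φ : 𝓐 × 𝓢 → ℝ, Measurable φ → (∃ C, ∀ x, |φ x| ≤ C) →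
      ∫ ω, φ (A ω, S ω) ∂P = ∫ ω, (∫ a, φ (a, S ω) * f (a, S ω) ∂μA) ∂P)
    (ψ : 𝓐 × 𝓢 → ENNReal) (hψ : Measurable ψ) :
    ∫⁻ ω, ψ (A ω, S ω) ∂P
      = ∫⁻ ω, ∫⁻ a, ψ (a, S ω) * ENNReal.ofReal (f (a, S ω)) ∂μA ∂P := by
  have hq : ∀ B : Set (𝓐 × 𝓢), MeasurableSet B →
      Measurable (fun s => ∫⁻ a, B.indicator 1 (a, s) * ENNReal.ofReal (f (a, s)) ∂μA) := by
    intro B hB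
    apply Measurable.lintegral_prod_left' (f := fun p : 𝓐 × 𝓢 =>
      B.indicator 1 p * ENNReal.ofReal (f p))
    exact (measurable_one.indicator hB).mul hf.ennreal_ofReal
  have hin : ∀ (B : Set (𝓐 × 𝓢)), MeasurableSet B → ∀ s,
      ∫ a, B.indicator (1 : 𝓐 × 𝓢 → ℝ) (a, s) * f (a, s) ∂μA
       = (∫⁻ a, B.indicator 1 (a, s) * ENNReal.ofReal (f (a, s)) ∂μA).toReal := by
    intro B hB s
    rw [integral_eq_lintegral_of_nonneg_ae]
    · congr 1
      apply lintegral_congr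
      intro a
      by_cases h : (a, s) ∈ B <;> simp [h]
    · refine Filter.Eventually.of_forall fun a => ?_
      exact mul_nonneg (Set.indicator_nonneg (fun _ _ => zero_le_one) _) (hf_nonneg _)
    · exact (((measurable_one.indicator hB).mul hf).comp
        (measurable_id.prodMk measurable_const)).aestronglyMeasurable
  have hd' : ∀ (B : Set (𝓐 × 𝓢)), MeasurableSet B →
      P.real {ω | (A ω, S ω) ∈ B}
       = ∫ ω, (∫⁻ a, B.indicator 1 (a, S ω) * ENNReal.ofReal (f (a, S ω)) ∂μA).toReal ∂P := by
    intro B hB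
    have := hd (B.indicator 1) (measurable_one.indicator hB) ⟨1, fun x => by
      by_cases h : x ∈ B <;> simp [h]⟩
    simp_rw [hin B hB] at this
    rw [← this]
    exact (integral_indicator_one ((hA.prodMk hS) hB)).symm
  set q : 𝓢 → ENNReal := fun s => ∫⁻ a, ENNReal.ofReal (f (a, s)) ∂μA with hqdef
  have hqm : Measurable q := by simpa using hq Set.univ .univ
  have hle : ∀ (B : Set (𝓐 × 𝓢)) s,
      ∫⁻ a, B.indicator 1 (a, s) * ENNReal.ofReal (f (a, s)) ∂μA ≤ q s := by
    intro B s
    apply lintegral_mono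
    intro a
    by_cases h : (a, s) ∈ B <;> simp [h]
  have hfin : ∀ᵐ ω ∂P, q (S ω) ≠ ⊤ := by
    have hN : MeasurableSet {s | q s = ⊤} := hqm (measurableSet_singleton _)
    have := hd' (Prod.snd ⁻¹' {s | q s = ⊤}) (measurable_snd hN)
    have h0 : ∀ s, (∫⁻ a, (Prod.snd ⁻¹' {s | q s = ⊤} : Set (𝓐 × 𝓢)).indicator 1 (a, s)
        * ENNReal.ofReal (f (a, s)) ∂μA).toReal = 0 := by
      intro s
      by_cases h : q s = ⊤
      · simp [h, Set.indicator]
        change (q s).toReal = 0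
        rw [h]; rfl
      · simp [h, Set.indicator]
    simp_rw [h0] at this
    simp only [integral_zero] at this
    rw [measureReal_eq_zero_iff] at this
    rw [ae_iff]
    simpa using this
  have hqint : Integrable (fun ω => (q (S ω)).toReal) P := by
    by_contra h
    have := hd' Set.univ .univ
    simp at this
    rw [integral_undef h] at this
    exact one_ne_zero this
  have hmeas : P.map (fun ω => (A ω, S ω))
      = ((μA.prod P).withDensity (fun x => ENNReal.ofReal (f (x.1, S x.2)))).map
        (fun x => (x.1, S x.2)) := by
    ext B hB
    have hm : Measurable (fun x : 𝓐 × Ω => (x.1, S x.2)) := by fun_prop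
    rw [Measure.map_apply (by fun_prop) hB, Measure.map_apply hm hB,
      withDensity_apply _ (hm hB), ← lintegral_indicator (hm hB), lintegral_prod_symm]
    swap
    · exact ((hf.comp hm).ennreal_ofReal.indicator (hm hB)).aemeasurable
    have e1 : ∀ (ω : Ω), ∫⁻ a, ((fun x : 𝓐 × Ω => (x.1, S x.2)) ⁻¹' B).indicator
        (fun x => ENNReal.ofReal (f (x.1, S x.2))) (a, ω) ∂μA
        = ∫⁻ a, B.indicator 1 (a, S ω) * ENNReal.ofReal (f (a, S ω)) ∂μA := by
      intro ω
      apply lintegral_congr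
      intro a
      by_cases h : (a, S ω) ∈ B <;> simp [h, Set.indicator]
    simp_rw [e1]
    have h1 := hd' B hB
    rw [integral_toReal (f := fun ω => ∫⁻ a, B.indicator 1 (a, S ω) * ENNReal.ofReal (f (a, S ω)) ∂μA)
      ((hq B hB).comp hS).aemeasurable] at h1
    · have hne : ∫⁻ ω, ∫⁻ a, B.indicator 1 (a, S ω) * ENNReal.ofReal (f (a, S ω)) ∂μA ∂P ≠ ⊤ := by
        refine ne_top_of_le_ne_top ?_ (lintegral_mono (fun ω => hle B (S ω)))
        have := hqint.lintegral_lt_top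
        rw [lintegral_congr_ae (g := fun ω => q (S ω))] at this
        · exact this.ne
        · filter_upwards [hfin] with ω h
          exact ENNReal.ofReal_toReal h
      exact (ENNReal.toReal_eq_toReal_iff' (measure_ne_top _ _) hne).1 h1
    · filter_upwards [hfin] with ω h
      exact lt_of_le_of_lt (hle B (S ω)) (lt_top_iff_ne_top.2 h)
  have hm : Measurable (fun x : 𝓐 × Ω => (x.1, S x.2)) := by fun_prop
  have h2 := congrArg (fun ν => ∫⁻ y, ψ y ∂ν) hmeas
  rw [lintegral_map hψ (by fun_prop), lintegral_map hψ hm] at h2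
  replace h2 := h2.trans
    (lintegral_withDensity_eq_lintegral_mul _ (hf.comp hm).ennreal_ofReal (hψ.comp hm))
  rw [lintegral_prod_symm] at h2
  · rw [h2]
    simp [mul_comm]
  · exact ((hf.comp hm).ennreal_ofReal.mul (hψ.comp hm)).aemeasurable

lemma icc_aux_cov {Ω 𝓐 𝓢 𝓧 : Type*} [MeasurableSpace Ω] [MeasurableSpace 𝓐] [MeasurableSpace 𝓢]
    [MeasurableSpace 𝓧]
    (P : Measure Ω) [IsProbabilityMeasure P] (μA : Measure 𝓐) [SigmaFinite μA]
    (A : Ω → 𝓐) (S : Ω → 𝓢) (X : Ω → 𝓧) (hA : Measurable A) (hS : Measurable S)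
    (hX : Measurable X)
    (f : 𝓐 × 𝓢 → ℝ) (hf : Measurable f) (hf_nonneg : ∀ x, 0 ≤ f x)
    (hd : ∀ φ : 𝓐 × 𝓢 → ℝ, Measurable φ → (∃ C, ∀ x, |φ x| ≤ C) →
      ∫ ω, φ (A ω, S ω) ∂P = ∫ ω, (∫ a, φ (a, S ω) * f (a, S ω) ∂μA) ∂P)
    (κ : Kernel 𝓢 𝓧) [IsMarkovKernel κ]
    (hκ : ∀ φ : 𝓢 × 𝓐 × 𝓧 → ENNReal, Measurable φ →
      ∫⁻ ω, φ (S ω, A ω, X ω) ∂P = ∫⁻ ω, ∫⁻ x, φ (S ω, A ω, x) ∂(κ (S ω)) ∂P)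
    (π : 𝓐 → ℝ) (hπ : Measurable π)
    (hf_pos : ∀ᵐ x ∂(μA.prod P), π x.1 ≠ 0 → 0 < f (x.1, S x.2))
    (G : 𝓢 × 𝓐 × 𝓧 → ℝ) (hG : Measurable G)
    (hint : Integrable (fun x : 𝓐 × Ω => G (S x.2, x.1, X x.2) * π x.1) (μA.prod P)) :
    Integrable (fun ω => π (A ω) / f (A ω, S ω) * G (S ω, A ω, X ω)) P ∧
    ∫ ω, π (A ω) / f (A ω, S ω) * G (S ω, A ω, X ω) ∂P
      = ∫ ω, ∫ a, G (S ω, a, X ω) * π a ∂μA ∂P := by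
  have hm : Measurable (fun x : 𝓐 × Ω => (S x.2, x.1, X x.2)) := by fun_prop
  have hfm : Measurable (fun x : 𝓐 × Ω => f (x.1, S x.2)) := by fun_prop
  have key : ∀ φ : 𝓢 × 𝓐 × 𝓧 → ENNReal, Measurable φ →
      ∫⁻ ω, φ (S ω, A ω, X ω) ∂P
        = ∫⁻ x, ENNReal.ofReal (f (x.1, S x.2)) * φ (S x.2, x.1, X x.2) ∂(μA.prod P) := by
    intro φ hφ
    have hψ : Measurable (fun p : 𝓐 × 𝓢 => ∫⁻ x, φ (p.2, p.1, x) ∂(κ p.2)) := by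
      have : Measurable (Function.uncurry fun (p : 𝓐 × 𝓢) (x : 𝓧) => φ (p.2, p.1, x)) := by
        unfold Function.uncurry; fun_prop
      exact Measurable.lintegral_kernel_prod_right (κ := κ.comap Prod.snd measurable_snd) this
    rw [hκ φ hφ, icc_aux_density P μA A S hA hS f hf hf_nonneg hd
      (fun p => ∫⁻ x, φ (p.2, p.1, x) ∂(κ p.2)) hψ, lintegral_prod]
    swap
    · exact (hfm.ennreal_ofReal.mul (hφ.comp hm)).aemeasurable
    rw [lintegral_lintegral_swap]
    swap
    · have h1 : Measurable (fun p : Ω × 𝓐 => (p.2, S p.1)) := by fun_prop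
      exact ((hψ.comp h1).mul (hf.comp h1).ennreal_ofReal).aemeasurable
    apply lintegral_congr
    intro a
    rw [hκ (fun y => ENNReal.ofReal (f (a, y.1)) * φ (y.1, a, y.2.2)) (by fun_prop)]
    apply lintegral_congr
    intro ω
    dsimp only
    rw [lintegral_const_mul _ (by fun_prop), mul_comm]
  have hmeas : P.map (fun ω => (S ω, A ω, X ω))
      = ((μA.prod P).withDensity (fun x => ENNReal.ofReal (f (x.1, S x.2)))).map
        (fun x => (S x.2, x.1, X x.2)) := by
    refine Measure.ext_of_lintegral _ fun φ hφ => ?_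
    rw [lintegral_map hφ (by fun_prop), lintegral_map hφ hm, key φ hφ]
    exact (lintegral_withDensity_eq_lintegral_mul _ hfm.ennreal_ofReal (hφ.comp hm)).symm
  set H : 𝓢 × 𝓐 × 𝓧 → ℝ := fun y => π y.2.1 / f (y.2.1, y.1) * G y with hH
  have hHm : Measurable H := by
    apply Measurable.mul _ hG
    apply Measurable.div <;> fun_prop
  have hae : (fun x : 𝓐 × Ω => (ENNReal.ofReal (f (x.1, S x.2))).toReal • H (S x.2, x.1, X x.2))
      =ᵐ[μA.prod P] (fun x : 𝓐 × Ω => G (S x.2, x.1, X x.2) * π x.1) := by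
    filter_upwards [hf_pos] with x hx
    rw [ENNReal.toReal_ofReal (hf_nonneg _)]
    by_cases h : π x.1 = 0
    · simp [hH, h]
    · have := (hx h).ne'
      simp only [hH, smul_eq_mul]
      field_simp
  have hSAX : Measurable (fun ω => (S ω, A ω, X ω)) := by fun_prop
  constructor
  · change Integrable (H ∘ fun ω => (S ω, A ω, X ω)) P
    rw [← integrable_map_measure hHm.aestronglyMeasurable hSAX.aemeasurable, hmeas,
      integrable_map_measure hHm.aestronglyMeasurable hm.aemeasurable,
      integrable_withDensity_iff_integrable_smul' hfm.ennreal_ofReal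
        (Filter.Eventually.of_forall fun _ => ENNReal.ofReal_lt_top)]
    exact hint.congr hae.symm
  · change ∫ ω, H (S ω, A ω, X ω) ∂P = _
    rw [← integral_map (φ := fun ω => (S ω, A ω, X ω)) hSAX.aemeasurable hHm.aestronglyMeasurable,
      hmeas, integral_map hm.aemeasurable hHm.aestronglyMeasurable,
      integral_withDensity_eq_integral_toReal_smul hfm.ennreal_ofReal
        (Filter.Eventually.of_forall fun _ => ENNReal.ofReal_lt_top), integral_congr_ae hae,
      integral_prod_symm _ hint]

lemma icc_aux_kernel {Ω 𝓑 𝓢 𝓧 : Type*} [MeasurableSpace Ω] [StandardBorelSpace Ω] [Nonempty Ω]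
    [MeasurableSpace 𝓑] [StandardBorelSpace 𝓑] [Nonempty 𝓑] [MeasurableSpace 𝓢]
    [MeasurableSpace 𝓧] [StandardBorelSpace 𝓧] [Nonempty 𝓧]
    (P : Measure Ω) [IsProbabilityMeasure P]
    (B : Ω → 𝓑) (S : Ω → 𝓢) (X : Ω → 𝓧) (hB : Measurable B) (hS : Measurable S)
    (hX : Measurable X)
    (h : CondIndepFun (MeasurableSpace.comap S inferInstance) hS.comap_le X B P)
    (φ : 𝓢 × 𝓑 × 𝓧 → ENNReal) (hφ : Measurable φ) :
    ∫⁻ ω, φ (S ω, B ω, X ω) ∂P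
      = ∫⁻ ω, ∫⁻ x, φ (S ω, B ω, x) ∂(condDistrib X S P (S ω)) ∂P := by
  have h1 := (condIndepFun_iff_condDistrib_prod_ae_eq_prodMkRight hX hB hS).1 h.symm
  have h2 := compProd_map_condDistrib (mβ := inferInstance) (μ := P) (X := fun ω => (S ω, B ω)) hX.aemeasurable
  rw [Measure.compProd_congr h1] at h2
  have hφ' : Measurable (fun y : (𝓢 × 𝓑) × 𝓧 => φ (y.1.1, y.1.2, y.2)) := by fun_prop
  have h3 := congrArg (fun ν => ∫⁻ y, φ (y.1.1, y.1.2, y.2) ∂ν) h2.symm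
  rw [lintegral_map hφ' (by fun_prop), Measure.lintegral_compProd hφ',
    lintegral_map hφ'.lintegral_kernel_prod_right' (by fun_prop)] at h3
  exact h3

/-- **Lemma 9, regression part (ICC paper).** If `W ⫫ (A, Z) | U`,
`ε ⫫ A | (Ṽ, U)`, the common-support condition holds for a conditional density
`f` of `A` given `(Ṽ, U)`, and `h₀` satisfies the structural outcome-bridge
condition `E[Y − h₀(A,Ṽ,W) | A, Ṽ, U] = 0` a.s., then the regression identity
`E[∫ h₀(a, Ṽ, W) π(a) dμ_A(a)] = J := E[∫ g(a, U, ε) π(a) dμ_A(a)]` holds. -/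
theorem icc_lemma9_reg_bridge
    {Ω 𝓐 𝓤 𝓩 𝓦 𝓔 : Type*}
    [MeasurableSpace Ω] [StandardBorelSpace Ω] [Nonempty Ω]
    [MeasurableSpace 𝓐] [StandardBorelSpace 𝓐]
    [MeasurableSpace 𝓤] [StandardBorelSpace 𝓤]
    [MeasurableSpace 𝓩] [StandardBorelSpace 𝓩]
    [MeasurableSpace 𝓦] [StandardBorelSpace 𝓦]
    [MeasurableSpace 𝓔] [StandardBorelSpace 𝓔]
    (P : Measure Ω) [IsProbabilityMeasure P]
    (μA : Measure 𝓐) [SigmaFinite μA]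
    (A : Ω → 𝓐) (U : Ω → 𝓤) (Z : Ω → 𝓩) (W : Ω → 𝓦) (ε : Ω → 𝓔)
    (hA : Measurable A) (hU : Measurable U) (hZ : Measurable Z) (hW : Measurable W)
    (hε : Measurable ε)
    (g : 𝓐 × 𝓤 × 𝓔 → ℝ) (π : 𝓐 → ℝ) (hg : Measurable g) (hπ : Measurable π)
    (v : 𝓐 × 𝓩 → ℝ) (hv : Measurable v)
    -- (i) W ⫫ (A, Z) | U
    (hWindep : CondIndepFun (MeasurableSpace.comap U inferInstance) hU.comap_le
      W (fun ω => (A ω, Z ω)) P)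
    -- (ii) ε ⫫ A | (Ṽ, U), where Ṽ = v(A, Z)
    (hεAindep : CondIndepFun
      (MeasurableSpace.comap (fun ω => (v (A ω, Z ω), U ω)) inferInstance)
      (Measurable.comap_le (by fun_prop)) ε A P)
    -- (iii) common support: f is a conditional density of A given (Ṽ, U)
    -- w.r.t. μ_A, positive where π ≠ 0
    (f : 𝓐 × ℝ × 𝓤 → ℝ) (hf : Measurable f) (hf_nonneg : ∀ x, 0 ≤ f x)
    (hf_density : ∀ φ : 𝓐 × ℝ × 𝓤 → ℝ, Measurable φ → (∃ C, ∀ x, |φ x| ≤ C) →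
      ∫ ω, φ (A ω, v (A ω, Z ω), U ω) ∂P
        = ∫ ω, (∫ a, φ (a, v (A ω, Z ω), U ω) * f (a, v (A ω, Z ω), U ω) ∂μA) ∂P)
    (hf_pos : ∀ᵐ x ∂(μA.prod P), π x.1 ≠ 0 → 0 < f (x.1, v (A x.2, Z x.2), U x.2))
    -- (iv) structural outcome-bridge condition:
    -- E[Y − h₀(A, Ṽ, W) | A, Ṽ, U] = 0 a.s., with Y = g(A, U, ε)
    (h₀ : 𝓐 × ℝ × 𝓦 → ℝ) (hh₀ : Measurable h₀)
    (hbridge : P[(fun ω => g (A ω, U ω, ε ω) - h₀ (A ω, v (A ω, Z ω), W ω)) |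
        MeasurableSpace.comap (fun ω => (A ω, v (A ω, Z ω), U ω)) inferInstance]
      =ᵐ[P] 0)
    -- (v) integrability of all displayed integrands
    (hYInt : Integrable (fun ω => g (A ω, U ω, ε ω)) P)
    (hh₀Int : Integrable (fun ω => h₀ (A ω, v (A ω, Z ω), W ω)) P)
    (hREGInt : Integrable
      (fun x : 𝓐 × Ω => h₀ (x.1, v (A x.2, Z x.2), W x.2) * π x.1) (μA.prod P))
    (hJInt : Integrable (fun x : 𝓐 × Ω => g (x.1, U x.2, ε x.2) * π x.1) (μA.prod P)) :
    ∫ ω, (∫ a, h₀ (a, v (A ω, Z ω), W ω) * π a ∂μA) ∂P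
      = ∫ ω, (∫ a, g (a, U ω, ε ω) * π a ∂μA) ∂P := by
  have : Nonempty 𝓐 := ⟨A (Classical.arbitrary Ω)⟩
  have : Nonempty 𝓩 := ⟨Z (Classical.arbitrary Ω)⟩
  have : Nonempty 𝓦 := ⟨W (Classical.arbitrary Ω)⟩
  have : Nonempty 𝓔 := ⟨ε (Classical.arbitrary Ω)⟩
  set S : Ω → ℝ × 𝓤 := fun ω => (v (A ω, Z ω), U ω) with hSdef
  have hS : Measurable S := by fun_prop
  have kε := icc_aux_kernel P A S ε hA hS hε hεAindep
  let κW : Kernel (ℝ × 𝓤) 𝓦 := (condDistrib W U P).comap Prod.snd measurable_snd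
  have : IsMarkovKernel κW := by unfold κW; infer_instance
  have kW : ∀ φ : (ℝ × 𝓤) × 𝓐 × 𝓦 → ENNReal, Measurable φ →
      ∫⁻ ω, φ (S ω, A ω, W ω) ∂P = ∫⁻ ω, ∫⁻ x, φ (S ω, A ω, x)
        ∂(κW (S ω)) ∂P := by
    intro φ hφ
    exact icc_aux_kernel P (fun ω => (A ω, Z ω)) U W (hA.prodMk hZ) hU hW hWindep
      (fun y => φ ((v y.2.1, y.1), y.2.1.1, y.2.2)) (by fun_prop)
  obtain ⟨i1, e1⟩ := icc_aux_cov P μA A S ε hA hS hε f hf hf_nonneg hf_density _ kε π hπ hf_pos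
    (fun y => g (y.2.1, y.1.2, y.2.2)) (by fun_prop) hJInt
  obtain ⟨i2, e2⟩ := icc_aux_cov P μA A S W hA hS hW f hf hf_nonneg hf_density _ kW π hπ hf_pos
    (fun y => h₀ (y.2.1, y.1.1, y.2.2)) (by fun_prop) hREGInt
  refine e2.symm.trans (Eq.trans ?_ e1)
  symm
  rw [← sub_eq_zero, ← integral_sub i1 i2]
  have hT : Measurable (fun ω => (A ω, v (A ω, Z ω), U ω)) := by fun_prop
  set m := MeasurableSpace.comap (fun ω => (A ω, v (A ω, Z ω), U ω)) inferInstance with hmdef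
  have hk : StronglyMeasurable[m] (fun ω => π (A ω) / f (A ω, S ω)) := by
    have h1 : Measurable (fun y : 𝓐 × ℝ × 𝓤 => π y.1 / f y) := by
      apply Measurable.div <;> fun_prop
    exact (h1.comp (comap_measurable _)).stronglyMeasurable
  have hD := hYInt.sub hh₀Int
  have heq : (fun ω => π (A ω) / f (A ω, S ω) * g (A ω, U ω, ε ω)
      - π (A ω) / f (A ω, S ω) * h₀ (A ω, v (A ω, Z ω), W ω))
      = (fun ω => π (A ω) / f (A ω, S ω)) *
        (fun ω => g (A ω, U ω, ε ω) - h₀ (A ω, v (A ω, Z ω), W ω)) := by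
    ext ω; simp [mul_sub]
  have hI := i1.sub i2
  have hp := condExp_mul_of_stronglyMeasurable_left hk (heq ▸ hI) hD
  change ∫ ω, (π (A ω) / f (A ω, S ω) * g (A ω, U ω, ε ω)
      - π (A ω) / f (A ω, S ω) * h₀ (A ω, v (A ω, Z ω), W ω)) ∂P = 0
  rw [heq, ← integral_condExp hT.comap_le]
  refine (integral_congr_ae hp).trans ?_
  apply integral_eq_zero_of_ae
  filter_upwards [hbridge] with ω hω
  simp only [Pi.mul_apply]
  have : (P[(fun ω => g (A ω, U ω, ε ω)) - (fun ω => h₀ (A ω, v (A ω, Z ω), W ω)) | m]) ω = 0 := hω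
  first | exact mul_eq_zero_of_right _ this | exact mul_eq_zero_of_right _ hω
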